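/- arXiv:1707.00658 — 2 statements merged into one kernel-verified Lean document; each statement's English description precedes it below -/
import Mathlib

section
/- Let D be a division ring algebraic over its center F such that either char(D) ≠ 2 or dim_F D > 4. Then the additive commutator subgroup [D, D] (the additive group generated by all elements xy − yx) is contained in T(D). -/
/-!
Write `T` for the `F`-span of the multiplicative commutators; it contains `1`. For `u ≠ 0`,
`b = a - c` with `c ∈ F` and `b ≠ 0`,
`(a u - u a) b⁻¹ u⁻¹ = b u b⁻¹ u⁻¹ - 1 ∈ T`,
because subtracting a scalar from `a` does not change `a u - u a`. If `F` is infinite and `a ∉ F` is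
algebraic, then `1` is a linear combination of the inverses `(a - c)⁻¹`, so
`a - u a u⁻¹ = (a u - u a) · 1 · u⁻¹ ∈ T`; for `a = x y` and `u = y` this is `x y - y x`.

If `F` is finite, then `D` is commutative (Jacobson). Indeed every `x ≠ 0` lies in a finite domain,
so it has some finite order `n`. If `x` is not central, right multiplication by `x` is
an endomorphism of `D` as a left `ℤ[x]`-module, annihilated by `X ^ n - 1 = ∏ (X - x ^ i)`, and it
differs from left multiplication by `x`, so it has an eigenvector `y` with `y x = x ^ i y` and
`x ^ i ≠ x`. But then `x` and `y` generate a finite monoid,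
whose `F`-span is a finite domain, hence commutative by Wedderburn's little theorem.
-/

open Polynomial
open scoped Pointwise

theorem exists_hasEigenvalue_of_aeval_prod_X_sub_C_apply_eq_zero {R M : Type*} [CommRing R]
    [AddCommGroup M] [Module R M] {f : Module.End R M} {s : Finset R} {v : M} (hv : v ≠ 0)
    (h : aeval f (∏ c ∈ s, (X - C c)) v = 0) : ∃ c ∈ s, f.HasEigenvalue c := by
  classical
  induction s using Finset.induction_on with
  | empty => exact absurd (by simpa using h) hv
  | insert c s hc ih =>
    by_cases hrest : aeval f (∏ d ∈ s, (X - C d)) v = 0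
    · obtain ⟨d, hd, hfd⟩ := ih hrest
      exact ⟨d, Finset.mem_insert_of_mem hd, hfd⟩
    · rw [Finset.prod_insert hc, map_mul, Module.End.mul_apply] at h
      refine ⟨c, Finset.mem_insert_self c s, Module.End.hasEigenvalue_of_hasEigenvector
        (Module.End.hasEigenvector_iff.mpr ⟨Module.End.mem_eigenspace_iff.mpr ?_, hrest⟩)⟩
      simpa [sub_eq_zero] using h

theorem exists_semiconjBy_pow_of_isOfFinOrder {D : Type*} [Ring D] [IsDomain D] {x w : D}
    (hx : IsOfFinOrder x) (hxw : ¬Commute x w) :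
    ∃ y ≠ 0, ∃ i : ℕ, x ^ i ≠ x ∧ SemiconjBy y x (x ^ i) := by
  classical
  let R := Algebra.adjoin ℤ {x}
  let ζ : R := ⟨x, Algebra.self_mem_adjoin_singleton ℤ x⟩
  let ρ : Module.End R D := LinearMap.mulRight R x
  have hζ : IsPrimitiveRoot ζ (orderOf x) := by
    have horder : orderOf x = orderOf ζ :=
      orderOf_injective R.val.toMonoidHom Subtype.val_injective ζ
    exact horder ▸ IsPrimitiveRoot.orderOf ζ
  have hζ_mem : ζ ∈ nthRootsFinset (orderOf x) (1 : R) :=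
    (mem_nthRootsFinset hx.orderOf_pos 1).mpr hζ.pow_eq_one
  have hρ : aeval ρ (∏ c ∈ nthRootsFinset (orderOf x) (1 : R), (X - C c)) = 0 := by
    rw [← X_pow_sub_one_eq_prod hx.orderOf_pos hζ]
    simp [ρ, LinearMap.pow_mulRight, pow_orderOf_eq_one, Module.End.one_eq_id]
  have hcomm_ne : w * x - x * w ≠ 0 := sub_ne_zero.mpr fun h => hxw h.symm
  have hcomm_apply : aeval ρ (∏ c ∈ (nthRootsFinset (orderOf x) (1 : R)).erase ζ, (X - C c))
      (w * x - x * w) = 0 := by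
    rw [← Finset.prod_erase_mul _ _ hζ_mem, map_mul] at hρ
    simpa [ρ, ζ, Subalgebra.smul_def] using LinearMap.congr_fun hρ w
  obtain ⟨c, hc, hρc⟩ :=
    exists_hasEigenvalue_of_aeval_prod_X_sub_C_apply_eq_zero hcomm_ne hcomm_apply
  obtain ⟨hcζ, hc_root⟩ := Finset.mem_erase.mp hc
  have : NeZero (orderOf x) := ⟨hx.orderOf_pos.ne'⟩
  obtain ⟨i, -, rfl⟩ :=
    hζ.eq_pow_of_pow_eq_one ((mem_nthRootsFinset hx.orderOf_pos 1).mp hc_root)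
  obtain ⟨y, hy⟩ := hρc.exists_hasEigenvector
  exact ⟨y, hy.2, i, fun h => hcζ (Subtype.ext h), hy.apply_eq_smul⟩

theorem closure_pair_subset_powers_mul_powers {M : Type*} [Monoid M] {x y : M} {i : ℕ}
    (h : SemiconjBy y x (x ^ i)) :
    (Submonoid.closure {x, y} : Set M) ⊆ Submonoid.powers x * Submonoid.powers y := by
  intro z hz
  induction hz using Submonoid.closure_induction_left with
  | one => exact ⟨1, one_mem _, 1, one_mem _, one_mul 1⟩
  | mul_left g hg z _ ih =>
    obtain ⟨_, ⟨m, rfl⟩, _, ⟨n, rfl⟩, rfl⟩ := ih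
    obtain rfl | rfl := hg
    · exact ⟨_, ⟨m + 1, rfl⟩, _, ⟨n, rfl⟩, by simp only [pow_succ', mul_assoc]⟩
    · refine ⟨_, ⟨i * m, rfl⟩, _, ⟨n + 1, rfl⟩, ?_⟩
      simp only [pow_succ', pow_mul, ← mul_assoc, (h.pow_right m).eq]

theorem commute_of_mem_of_finite {R A : Type*} [CommRing R] [Ring A] [IsDomain A] [Algebra R A]
    {S : Subalgebra R A} [Finite S] {x y : A} (hx : x ∈ S) (hy : y ∈ S) : Commute x y :=
  congrArg Subtype.val ((Finite.isDomain_to_isField S).mul_comm ⟨x, hx⟩ ⟨y, hy⟩)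

theorem finite_adjoin_of_finite_closure {R A : Type*} [CommRing R] [Finite R] [Ring A] [Algebra R A]
    {s : Set A} (hs : (Submonoid.closure s : Set A).Finite) : Finite (Algebra.adjoin R s) := by
  have hfg : (Subalgebra.toSubmodule (Algebra.adjoin R s)).FG := by
    rw [Algebra.adjoin_eq_span]
    exact Submodule.fg_span hs
  have : Module.Finite R (Algebra.adjoin R s) := .of_fg hfg
  exact Module.finite_of_finite R

section FiniteBase

variable {F D : Type*} [CommRing F] [Finite F] [Ring D] [IsDomain D] [Algebra F D]

theorem isOfFinOrder_of_isIntegral_of_finite {x : D} (hx : IsIntegral F x) (hx0 : x ≠ 0) :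
    IsOfFinOrder x := by
  have : Module.Finite F (Algebra.adjoin F {x}) := .of_fg hx.fg_adjoin_singleton
  have : Finite (Algebra.adjoin F {x}) := Module.finite_of_finite F
  let ξ : Algebra.adjoin F {x} := ⟨x, Algebra.self_mem_adjoin_singleton F x⟩
  have hξ0 : ξ ≠ 0 := fun h => hx0 (congrArg Subtype.val h)
  have hξ : IsUnit ξ := isRegular_iff_isUnit_of_finite.mp (.of_ne_zero hξ0)
  exact (Algebra.adjoin F {x}).val.toMonoidHom.isOfFinOrder (isOfFinOrder_iff_isUnit.mpr hξ)

variable (F) in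
theorem commute_of_isIntegral_of_finite [Algebra.IsIntegral F D] (x w : D) : Commute x w := by
  by_contra hxw
  have hx0 : x ≠ 0 := by
    rintro rfl
    exact hxw (Commute.zero_left w)
  have isOfFinOrder {z : D} (hz : z ≠ 0) : IsOfFinOrder z :=
    isOfFinOrder_of_isIntegral_of_finite (Algebra.IsIntegral.isIntegral (R := F) z) hz
  obtain ⟨y, hy0, i, hi, hyx⟩ := exists_semiconjBy_pow_of_isOfFinOrder (isOfFinOrder hx0) hxw
  have hfin : (Submonoid.closure {x, y} : Set D).Finite :=
    ((isOfFinOrder hx0).finite_powers.mul (isOfFinOrder hy0).finite_powers).subset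
      (closure_pair_subset_powers_mul_powers hyx)
  have : Finite (Algebra.adjoin F {x, y}) := finite_adjoin_of_finite_closure hfin
  have hxy : Commute x y := commute_of_mem_of_finite (S := Algebra.adjoin F {x, y})
    (Algebra.subset_adjoin (by simp)) (Algebra.subset_adjoin (by simp))
  exact hi (mul_right_cancel₀ hy0 (hyx.eq.symm.trans hxy.eq.symm))

end FiniteBase

theorem aeval_nodal_ne_zero {ι R A : Type*} [CommRing R] [Ring A] [IsDomain A] [Algebra R A]
    {a : A} {s : Finset ι} {v : ι → R} (ha : ∀ i ∈ s, a ≠ algebraMap R A (v i)) :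
    aeval a (Lagrange.nodal s v) ≠ 0 :=
  Finset.prod_induction _ (fun p => aeval a p ≠ 0)
    (fun p q hp hq => by simpa using ⟨hp, hq⟩) (by simp)
    fun i hi => by simpa [sub_eq_zero] using ha i hi

section DivisionAlgebra

variable {F D : Type*} [Field F] [DivisionRing D] [Algebra F D]

theorem aeval_interpolate_not_at_node {ι : Type*} [DecidableEq ι] {a : D} {s : Finset ι}
    {v : ι → F} (r : ι → F) (ha : ∀ i ∈ s, a ≠ algebraMap F D (v i)) :
    aeval a (Lagrange.interpolate s v r) = aeval a (Lagrange.nodal s v) *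
      ∑ i ∈ s, (Lagrange.nodalWeight s v i * r i) • (a - algebraMap F D (v i))⁻¹ := by
  rw [Lagrange.interpolate_eq_nodalWeight_mul_nodal_div_X_sub_C, map_sum, Finset.mul_sum]
  refine Finset.sum_congr rfl fun i hi => ?_
  have hnodal : aeval a (Lagrange.nodal (s.erase i) v) =
      aeval a (Lagrange.nodal s v) * (a - algebraMap F D (v i))⁻¹ := by
    rw [eq_mul_inv_iff_mul_eq₀ (sub_ne_zero.mpr (ha i hi)),
      Lagrange.nodal_eq_mul_nodal_erase hi, mul_comm, map_mul]
    simp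
  rw [← Lagrange.nodal_erase_eq_nodal_div hi, mul_right_comm, ← C_mul, ← smul_eq_C_mul, map_smul,
    hnodal, mul_smul_comm]

/- For a nodal polynomial `N` of the same degree as `minpoly F a`, the difference `N - minpoly F a`
is its own interpolation polynomial at the nodes and takes the value `N(a)` at `a`. -/
theorem one_mem_span_range_inv_sub_algebraMap [Infinite F] {a : D} (ha : IsIntegral F a)
    (hF : ∀ c : F, a ≠ algebraMap F D c) :
    (1 : D) ∈ Submodule.span F (Set.range fun c : F => (a - algebraMap F D c)⁻¹) := by
  classical
  obtain ⟨s, hs⟩ := Infinite.exists_subset_card_eq F (minpoly F a).natDegree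
  have hdeg : (Lagrange.nodal s id - minpoly F a).degree < s.card := by
    rw [← Lagrange.degree_nodal (s := s) (v := id)]
    apply degree_sub_lt_left _ Lagrange.nodal_ne_zero
    · rw [Lagrange.nodal_monic.leadingCoeff, (minpoly.monic ha).leadingCoeff]
    · rw [Lagrange.degree_nodal, hs, degree_eq_natDegree (minpoly.ne_zero ha)]
  have hs_ne : ∀ c ∈ s, a ≠ algebraMap F D (id c) := fun c _ => hF c
  have hinterp := congrArg (aeval a) (Lagrange.eq_interpolate Function.injective_id.injOn hdeg)
  rw [aeval_interpolate_not_at_node _ hs_ne, map_sub, minpoly.aeval, sub_zero,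
    left_eq_mul₀ (aeval_nodal_ne_zero hs_ne)] at hinterp
  rw [← hinterp]
  exact Submodule.sum_mem _ fun c _ => Submodule.smul_mem _ _ (Submodule.subset_span ⟨c, rfl⟩)

variable (F D) in
/-- The `F`-linear span of all multiplicative commutators `x y x⁻¹ y⁻¹` of nonzero elements of `D`.
It is written `T(D)` when `F` is the center of `D`. -/
def mulCommutatorSpan : Submodule F D :=
  Submodule.span F {z : D | ∃ x y : D, x ≠ 0 ∧ y ≠ 0 ∧ z = x * y * x⁻¹ * y⁻¹}

theorem mul_mul_inv_mul_inv_mem_mulCommutatorSpan {x y : D} (hx : x ≠ 0) (hy : y ≠ 0) :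
    x * y * x⁻¹ * y⁻¹ ∈ mulCommutatorSpan F D :=
  Submodule.subset_span ⟨x, y, hx, hy, rfl⟩

theorem one_mem_mulCommutatorSpan : (1 : D) ∈ mulCommutatorSpan F D := by
  simpa using mul_mul_inv_mul_inv_mem_mulCommutatorSpan (F := F) (one_ne_zero' D) one_ne_zero

theorem sub_mul_inv_sub_algebraMap_mul_inv_mem_mulCommutatorSpan {a u : D} {c : F}
    (hu : u ≠ 0) (hc : a ≠ algebraMap F D c) :
    (a * u - u * a) * (a - algebraMap F D c)⁻¹ * u⁻¹ ∈ mulCommutatorSpan F D := by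
  set b := a - algebraMap F D c with hb
  have hb0 : b ≠ 0 := sub_ne_zero.mpr hc
  have hcomm : a * u - u * a = b * u - u * b := by
    rw [hb, sub_mul, mul_sub, Algebra.commutes]
    abel
  have hsplit : (a * u - u * a) * b⁻¹ * u⁻¹ = b * u * b⁻¹ * u⁻¹ - 1 := by
    rw [hcomm, sub_mul, sub_mul, mul_inv_cancel_right₀ hb0, mul_inv_cancel₀ hu]
  rw [hsplit]
  exact sub_mem (mul_mul_inv_mul_inv_mem_mulCommutatorSpan hb0 hu) one_mem_mulCommutatorSpan

theorem sub_conj_mem_mulCommutatorSpan [Infinite F] {a u : D} (ha : IsIntegral F a)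
    (hu : u ≠ 0) : a - u * a * u⁻¹ ∈ mulCommutatorSpan F D := by
  by_cases hF : ∃ c : F, a = algebraMap F D c
  · obtain ⟨c, rfl⟩ := hF
    simp [← Algebra.commutes, hu]
  push Not at hF
  have hle : Submodule.span F (Set.range fun c : F => (a - algebraMap F D c)⁻¹) ≤
      (mulCommutatorSpan F D).comap (LinearMap.mulLeftRight F (a * u - u * a, u⁻¹)) := by
    rw [Submodule.span_le]
    rintro _ ⟨c, rfl⟩
    simpa using sub_mul_inv_sub_algebraMap_mul_inv_mem_mulCommutatorSpan hu (hF c)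
  simpa [sub_mul, hu] using hle (one_mem_span_range_inv_sub_algebraMap ha hF)

theorem mul_sub_mul_mem_mulCommutatorSpan [Infinite F] {x y : D} (hxy : IsIntegral F (x * y)) :
    x * y - y * x ∈ mulCommutatorSpan F D := by
  obtain rfl | hy := eq_or_ne y 0
  · simp
  · simpa [mul_assoc, hy] using sub_conj_mem_mulCommutatorSpan hxy hy

end DivisionAlgebra

theorem stmt_5_general (F D : Type*) [Field F] [DivisionRing D] [Algebra F D]
    [Algebra.IsAlgebraic F D] :
    AddSubgroup.closure {z : D | ∃ x y : D, z = x * y - y * x} ≤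
      (mulCommutatorSpan F D).toAddSubgroup := by
  rw [AddSubgroup.closure_le]
  rintro _ ⟨x, y, rfl⟩
  rcases finite_or_infinite F with hfin | hinf
  · rw [(commute_of_isIntegral_of_finite F x y).eq, sub_self]
    exact zero_mem _
  · exact mul_sub_mul_mem_mulCommutatorSpan (Algebra.IsIntegral.isIntegral (x * y))

/-- If `D` is algebraic over its centre and either `char D ≠ 2` or `dim_F D > 4`, then the
additive commutator subgroup `[D,D]` is contained in `T(D)`. -/
theorem stmt_5 (D : Type*) [DivisionRing D]
    (halg : ∀ a : D, IsAlgebraic (Subring.center D) a)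
    (hnc : ∃ x y : D, x * y ≠ y * x)
    (hchar : ringChar D ≠ 2 ∨ 4 < Module.rank (Subring.center D) D)
    (T : Submodule (Subring.center D) D)
    (hT : T = Submodule.span (Subring.center D)
      {z : D | ∃ x y : D, x ≠ 0 ∧ y ≠ 0 ∧ z = x * y * x⁻¹ * y⁻¹}) :
    ∀ z ∈ AddSubgroup.closure {z : D | ∃ x y : D, z = x * y - y * x}, z ∈ T := by
  have : Algebra.IsAlgebraic (Subring.center D) D := ⟨halg⟩
  exact hT ▸ stmt_5_general (Subring.center D) D
end

section
/- Let D be a division ring of dimension n² over its center F. Then the F-vector subspace of D spanned by the additive commutators [D,D] has dimension n² − 1 over F; in particular [D,D] is a hyperplane of D. -/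
/-!
Over an algebraic closure `L` of the centre `K`, a central simple `K`-algebra `A` becomes a matrix
algebra, whose commutators span the kernel of the trace, a hyperplane. The commutator span commutes
with extension of scalars, so it already has codimension one in `A`.

That `L ⊗ A` remains simple comes from the density theorem: `A` is a simple `A`-bimodule whose only
endomorphisms are the scalars, so on finitely many elements every `K`-linear endomorphism of `A`
agrees with some `x ↦ ∑ aᵢ * x * bᵢ`. Such maps preserve the ideals of `L ⊗ A`, and a suitable one
turns a nonzero element of an ideal into a nonzero element of `L ⊗ 1`.
-/

open TensorProduct Module MulOpposite

section Bimodule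

attribute [local instance] instModuleTensorProductMop

variable {K A : Type*} [CommRing K] [Ring A] [Algebra K A]

theorem tmul_op_smul (a b x : A) : (a ⊗ₜ[K] op b) • x = a * x * b :=
  AlgHom.mulLeftRight_apply K A a (op b) x

theorem isSimpleModule_tensorProduct_mulOpposite [IsSimpleRing A] :
    IsSimpleModule (A ⊗[K] Aᵐᵒᵖ) A := by
  refine { eq_bot_or_eq_top := fun N ↦ or_iff_not_imp_left.2 fun hN ↦ ?_ }
  obtain ⟨x, hxN, hx⟩ := N.exists_mem_ne_zero_of_ne_bot hN
  have mul_mul_mem (a b : A) {y : A} (hy : y ∈ N) : a * y * b ∈ N := by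
    simpa only [tmul_op_smul] using N.smul_mem (a ⊗ₜ[K] op b) hy
  let I : TwoSidedIdeal A := .mk' N N.zero_mem N.add_mem N.neg_mem
    (fun {a _} hy ↦ by simpa using mul_mul_mem a 1 hy)
    (fun {_ b} hy ↦ by simpa using mul_mul_mem 1 b hy)
  have one_mem : (1 : A) ∈ N := by
    simpa [I] using IsSimpleRing.one_mem_of_ne_zero_mem I hx (by simpa [I] using hxN)
  exact N.eq_top_iff'.2 fun y ↦ by simpa using mul_mul_mem y 1 one_mem

theorem exists_eq_smul_of_bimodule_end [Algebra.IsCentral K A] (φ : End (A ⊗[K] Aᵐᵒᵖ) A) :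
    ∃ c : K, ∀ x, φ x = c • x := by
  have map_mul_mul (a b x : A) : φ (a * x * b) = a * φ x * b := by
    simpa only [tmul_op_smul] using φ.map_smul (a ⊗ₜ[K] op b) x
  have map_eq_mul (x : A) : φ x = x * φ 1 := by simpa using map_mul_mul x 1 1
  have map_eq_mul' (x : A) : φ x = φ 1 * x := by simpa using map_mul_mul 1 x 1
  obtain ⟨c, hc⟩ := (Algebra.IsCentral.mem_center_iff K).1 <|
    Subalgebra.mem_center_iff.2 fun x ↦ (map_eq_mul x).symm.trans (map_eq_mul' x)
  exact ⟨c, fun x ↦ by rw [map_eq_mul', hc, Algebra.smul_def]⟩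

theorem exists_mulLeftRight_eqOn [Algebra.IsCentral K A] [IsSimpleRing A]
    (f : End K A) (s : Finset A) :
    ∃ t : A ⊗[K] Aᵐᵒᵖ, ∀ x ∈ s, AlgHom.mulLeftRight K A t x = f x := by
  have := isSimpleModule_tensorProduct_mulOpposite (K := K) (A := A)
  let g : End (End (A ⊗[K] Aᵐᵒᵖ) A) A :=
    { f with
      map_smul' := fun φ x ↦ by
        obtain ⟨c, hc⟩ := exists_eq_smul_of_bimodule_end φ
        simp [hc] }
  obtain ⟨t, ht⟩ := jacobson_density g s
  exact ⟨t, fun x hx ↦ (ht x hx).symm⟩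

end Bimodule

theorem lTensor_mulLeftRight_mem {K A B : Type*} [CommRing K] [Ring A] [Algebra K A] [Ring B]
    [Algebra K B] (I : TwoSidedIdeal (B ⊗[K] A)) (t : A ⊗[K] Aᵐᵒᵖ) {z : B ⊗[K] A} (hz : z ∈ I) :
    (AlgHom.mulLeftRight K A t).lTensor B z ∈ I := by
  induction t with
  | zero => simp
  | add t u ht hu => simpa [LinearMap.lTensor_add] using I.add_mem ht hu
  | tmul a b =>
    have lTensor_eq : (AlgHom.mulLeftRight K A (a ⊗ₜ b)).lTensor B =
        LinearMap.mulLeftRight K (1 ⊗ₜ[K] a, 1 ⊗ₜ[K] b.unop) := by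
      ext; simp
    simpa only [lTensor_eq, LinearMap.mulLeftRight_apply] using
      I.mul_mem_right _ _ (I.mul_mem_left _ _ hz)

theorem exists_tmul_one_mem_of_ne_bot {K A B : Type*} [Field K] [Ring A] [Algebra K A]
    [Algebra.IsCentral K A] [IsSimpleRing A] [Ring B] [Algebra K B]
    {I : TwoSidedIdeal (B ⊗[K] A)} (hI : I ≠ ⊥) : ∃ b : B, b ≠ 0 ∧ b ⊗ₜ 1 ∈ I := by
  classical
  obtain ⟨z, hzI, hz⟩ : ∃ z ∈ I, z ≠ 0 := by
    contrapose! hI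
    exact eq_bot_iff.2 fun z hz ↦ hI z hz
  let e := Basis.ofVectorSpace K A
  obtain ⟨c, rfl⟩ := TensorProduct.eq_repr_basis_right e z
  obtain ⟨j, hj⟩ : ∃ j, c j ≠ 0 := by
    contrapose! hz
    simp [show c = 0 from Finsupp.ext hz]
  obtain ⟨t, ht⟩ := exists_mulLeftRight_eqOn (LinearMap.toSpanSingleton K A 1 ∘ₗ e.coord j)
    (c.support.image e)
  have lTensor_eq :
      (AlgHom.mulLeftRight K A t).lTensor B (c.sum fun i b ↦ b ⊗ₜ e i) = c j ⊗ₜ 1 :=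
    calc (AlgHom.mulLeftRight K A t).lTensor B (c.sum fun i b ↦ b ⊗ₜ e i)
        = ∑ i ∈ c.support, c i ⊗ₜ (e.coord j (e i) • 1) := by
          rw [Finsupp.sum, map_sum]
          exact Finset.sum_congr rfl fun i hi ↦
            congrArg (c i ⊗ₜ ·) (ht _ (Finset.mem_image_of_mem e hi))
      _ = c j ⊗ₜ 1 := by
          rw [Finset.sum_eq_single_of_mem j (Finsupp.mem_support_iff.2 hj)]
          · simp
          · intro i _ hij
            simp [hij]
  exact ⟨c j, hj, lTensor_eq ▸ lTensor_mulLeftRight_mem I t hzI⟩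

theorem isSimpleRing_tensorProduct (K A B : Type*) [Field K] [Ring A] [Algebra K A]
    [Algebra.IsCentral K A] [IsSimpleRing A] [Ring B] [Algebra K B] [IsSimpleRing B] :
    IsSimpleRing (B ⊗[K] A) := by
  refine .of_eq_bot_or_eq_top fun I ↦ or_iff_not_imp_left.2 fun hI ↦ I.one_mem_iff.1 ?_
  obtain ⟨b, hb, hbI⟩ := exists_tmul_one_mem_of_ne_bot hI
  let ι : B →ₐ[K] B ⊗[K] A := Algebra.TensorProduct.includeLeft
  have one_mem : (1 : B) ∈ I.comap ι :=
    IsSimpleRing.one_mem_of_ne_zero_mem _ hb ((TwoSidedIdeal.mem_comap ι).2 hbI)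
  exact map_one ι ▸ (TwoSidedIdeal.mem_comap ι).1 one_mem

/-- The `K`-linear span `[A, A]` of the additive commutators of a `K`-algebra `A`. -/
def commutatorSpan (K A : Type*) [CommRing K] [Ring A] [Algebra K A] : Submodule K A :=
  .span K {z | ∃ x y, z = x * y - y * x}

section CommutatorSpan

variable {K A B : Type*} [CommRing K] [Ring A] [Algebra K A] [Ring B] [Algebra K B]

theorem commutator_mem_commutatorSpan (x y : A) : x * y - y * x ∈ commutatorSpan K A :=
  Submodule.subset_span ⟨x, y, rfl⟩

theorem map_commutatorSpan_le (f : A →ₐ[K] B) :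
    (commutatorSpan K A).map f.toLinearMap ≤ commutatorSpan K B := by
  refine Submodule.map_le_iff_le_comap.2 (Submodule.span_le.2 ?_)
  rintro _ ⟨x, y, rfl⟩
  simpa using commutator_mem_commutatorSpan (f x) (f y)

theorem map_commutatorSpan (e : A ≃ₐ[K] B) :
    (commutatorSpan K A).map e.toLinearMap = commutatorSpan K B := by
  refine le_antisymm (map_commutatorSpan_le e.toAlgHom) fun x hx ↦ ?_
  exact ⟨e.symm x, map_commutatorSpan_le e.symm.toAlgHom ⟨x, hx, rfl⟩, by simp⟩

theorem baseChange_commutatorSpan (L : Type*) [CommRing L] [Algebra K L] :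
    (commutatorSpan K A).baseChange L = commutatorSpan L (L ⊗[K] A) := by
  apply le_antisymm
  · rw [commutatorSpan, Submodule.baseChange_span, Submodule.span_le]
    rintro _ ⟨_, ⟨x, y, rfl⟩, rfl⟩
    simpa [tmul_sub] using commutator_mem_commutatorSpan (K := L) ((1 : L) ⊗ₜ[K] x) (1 ⊗ₜ y)
  · refine Submodule.span_le.2 ?_
    rintro _ ⟨z, w, rfl⟩
    rw [SetLike.mem_coe]
    induction z with
    | zero => simp
    | add z z' hz hz' => simpa [add_mul, mul_add, add_sub_add_comm] using add_mem hz hz'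
    | tmul c x =>
      induction w with
      | zero => simp
      | add w w' hw hw' => simpa [add_mul, mul_add, add_sub_add_comm] using add_mem hw hw'
      | tmul d y =>
        simpa [tmul_sub, mul_comm d c] using
          Submodule.tmul_mem_baseChange_of_mem (c * d) (commutator_mem_commutatorSpan (K := K) x y)

end CommutatorSpan

section Matrix

open Matrix

variable {K n : Type*} [CommRing K] [Fintype n] [DecidableEq n]

theorem sub_single_trace_mem_commutatorSpan (k : n) (M : Matrix n n K) :
    M - single k k M.trace ∈ commutatorSpan K (Matrix n n K) := by
  induction M using Matrix.induction_on' with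
  | h_zero => simp
  | h_add M N hM hN => simpa [single_add, add_sub_add_comm] using add_mem hM hN
  | h_std_basis i j c =>
    obtain rfl | hij := eq_or_ne i j
    · simpa using commutator_mem_commutatorSpan (K := K) (single i k c) (single k i 1)
    · simpa [hij, hij.symm] using
        commutator_mem_commutatorSpan (K := K) (single i i 1) (single i j c)

theorem commutatorSpan_matrix_eq_ker_trace :
    commutatorSpan K (Matrix n n K) = (traceLinearMap n K K).ker := by
  apply le_antisymm
  · refine Submodule.span_le.2 ?_
    rintro _ ⟨M, N, rfl⟩
    simp [trace_mul_comm M N]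
  · intro M hM
    obtain _ | ⟨⟨k⟩⟩ := isEmpty_or_nonempty n
    · simp [Subsingleton.elim M 0]
    · have trace_eq_zero : M.trace = 0 := hM
      simpa [trace_eq_zero] using sub_single_trace_mem_commutatorSpan k M

theorem finrank_commutatorSpan_matrix_add_one {K : Type*} [Field K] [Nonempty n] :
    finrank K (commutatorSpan K (Matrix n n K)) + 1 = finrank K (Matrix n n K) := by
  have range_trace : (traceLinearMap n K K).range = ⊤ :=
    LinearMap.range_eq_top.2 trace_surjective
  rw [commutatorSpan_matrix_eq_ker_trace, ← (traceLinearMap n K K).finrank_range_add_finrank_ker,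
    range_trace, finrank_top, finrank_self, add_comm]

end Matrix

theorem exists_baseChange_algebraicClosure_algEquiv_matrix (K A : Type*) [Field K] [Ring A]
    [Algebra K A] [Algebra.IsCentral K A] [IsSimpleRing A] [Module.Finite K A] :
    ∃ (n : ℕ) (_ : NeZero n), Nonempty
      (AlgebraicClosure K ⊗[K] A ≃ₐ[AlgebraicClosure K]
        Matrix (Fin n) (Fin n) (AlgebraicClosure K)) :=
  have := isSimpleRing_tensorProduct K A (AlgebraicClosure K)
  IsSimpleRing.exists_algEquiv_matrix_of_isAlgClosed _ _

theorem stmt_8_general (K A : Type*) [Field K] [Ring A] [Algebra K A] [Algebra.IsCentral K A]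
    [IsSimpleRing A] [Module.Finite K A] :
    finrank K (commutatorSpan K A) + 1 = finrank K A := by
  let L := AlgebraicClosure K
  obtain ⟨n, _, ⟨e⟩⟩ := exists_baseChange_algebraicClosure_algEquiv_matrix K A
  calc finrank K (commutatorSpan K A) + 1
      = finrank L ((commutatorSpan K A).baseChange L) + 1 := by
        rw [← (Submodule.toBaseChange.toLinearEquiv L _).finrank_eq, finrank_baseChange]
    _ = finrank L (commutatorSpan L (Matrix (Fin n) (Fin n) L)) + 1 := by
        rw [baseChange_commutatorSpan, ← map_commutatorSpan e]
        exact congrArg (· + 1) (e.toLinearEquiv.finrank_map_eq _).symm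
    _ = finrank L (Matrix (Fin n) (Fin n) L) := finrank_commutatorSpan_matrix_add_one
    _ = finrank L (L ⊗[K] A) := e.toLinearEquiv.finrank_eq.symm
    _ = finrank K A := finrank_baseChange

theorem isCentral_subringCenter (R : Type*) [Ring R] : Algebra.IsCentral (Subring.center R) R where
  out x hx := Algebra.mem_bot.2 ⟨⟨x, hx⟩, rfl⟩

/-- If `dim_F D = n²`, then the span of additive commutators has dimension `n² - 1`. -/
theorem stmt_8 (D : Type*) [DivisionRing D] (n : ℕ) (hn : 1 ≤ n)
    [Module.Finite (Subring.center D) D]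
    (hdim : Module.finrank (Subring.center D) D = n ^ 2) :
    Module.finrank (Subring.center D)
      (Submodule.span (Subring.center D) {z : D | ∃ x y : D, z = x * y - y * x})
      = n ^ 2 - 1 := by
  have := isCentral_subringCenter D
  exact hdim ▸ Nat.eq_sub_of_add_eq (stmt_8_general (Subring.center D) D)
end
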